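/- For every n ≥ 2, the number of permutations π ∈ S_n that avoid the generalized pattern 21-3 and satisfy π_1 = n equals the Bell number B_{n-1}; and for every k with 1 ≤ k ≤ n-1, the number of permutations π ∈ S_n that avoid 21-3 and satisfy π_1 = k equals ∇^{k-1}(B_{n-1}) = Σ_{i=0}^{k-1} (-1)^i · C(k-1, i) · B_{n-1-i}. -/

import Mathlib

/-!
Write a permutation of `Fin (n + 2)` as its first value `k` followed by a permutation `σ` of
`Fin (n + 1)`, relabelled by `k.succAbove` (`ins`).  It avoids 21-3 iff `σ` does and, unless `k` is
the largest value, the second entry exceeds the first: if it did not, the largest value would occur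
later and complete a 21-3 (`avoids_ins`).  So the number `A n k` of avoiding permutations of
`Fin (n + 1)` starting with `k` (`firstCount`) satisfies `A (n + 1) k = ∑_{l ≥ k} A n l` for `k ≤ n`, and
`A (n + 1) (n + 1) = ∑_l A n l` (`firstCount_succ`).

This recurrence is solved umbrally.  Let `L` be the linear functional on `ℤ[X]` with
`L (X ^ m) = bell m`.  The recurrence `bell (m + 1) = ∑ C(m, i) bell i` (`bell_succ'`) says
`L (X * p) = L (p (X + 1))`, hence `L (X * (X - 1) ^ m) = L (X ^ m)`.  With the geometric sum of
`X` and `X - 1`, whose difference is `1`, this gives by induction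
`A n k = L (X ^ (n - k) * (X - 1) ^ k)` for `k < n` and `A n n = bell n`.  Expanding `(X - 1) ^ k`
yields the iterated difference.
-/

/-- `π` avoids the generalized pattern 21-3. -/
def Avoids21d3 {n : ℕ} (π : Equiv.Perm (Fin n)) : Prop :=
  ¬ ∃ (i j : Fin n) (h : i.1 + 1 < n), i.1 + 1 < j.1 ∧ π ⟨i.1 + 1, h⟩ < π i ∧ π i < π j

/-- The `m`-th Bell number: the number of partitions of a set with `m` elements,
equivalently the number of equivalence relations (setoids) on `Fin m`. -/
noncomputable def bell (m : ℕ) : ℕ := Nat.card (Setoid (Fin m))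

open Polynomial

/-! ### The Bell recurrence -/

section BellRecurrence

open Classical in
/-- Setoids on `Option α` for which `s` is the set of elements not related to `none` correspond to
setoids on `s`. -/
noncomputable def setoidFiberEquiv {α : Type} [Fintype α] (s : Finset α) :
    {r : Setoid (Option α) // (Finset.univ.filter fun a => ¬ r (some a) none) = s} ≃ Setoid s where
  toFun r := Setoid.comap (fun a : s => some a.1) r.1
  invFun t := ⟨Setoid.ker (fun x : Option α => x.elim (none : Option (Quotient t))
      fun a => if h : a ∈ s then some (Quotient.mk t ⟨a, h⟩) else none), by
    ext a
    by_cases h : a ∈ s <;> simp [Setoid.ker_def, h]⟩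
  left_inv := by
    rintro ⟨r, rfl⟩
    apply Subtype.ext
    have key : ∀ a, a ∈ (Finset.univ.filter fun a => ¬ r (some a) none) ↔ ¬ r (some a) none := by
      simp
    refine Setoid.ext fun x y => ?_
    rw [Setoid.ker_def]
    rcases x with _ | a <;> rcases y with _ | b
    · simp
    · by_cases h : r (some b) none
      · simp [h, r.symm' h]
      · have : ¬ r none (some b) := fun h' => h (r.symm' h')
        simp [h, this]
    · by_cases h : r (some a) none <;> simp [h]
    · by_cases h : r (some a) none <;> by_cases h' : r (some b) none
      · simp [h, h', r.trans' h (r.symm' h')]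
      · have : ¬ r (some a) (some b) := fun q => h' (r.trans' (r.symm' q) h)
        simp [h, h', this]
      · have : ¬ r (some a) (some b) := fun q => h (r.trans' q h')
        simp [h, h', this]
      · simp only [Option.elim, key, h, h', not_false_eq_true, dite_true, Option.some.injEq]
        rw [Quotient.eq]
        rfl
  right_inv t := by
    refine Setoid.ext fun x y => ?_
    rw [Setoid.comap_rel]
    change Setoid.ker _ _ _ ↔ _
    rw [Setoid.ker_def]
    simp only [Option.elim, x.2, y.2, dite_true, Option.some.injEq, Quotient.eq]

theorem card_setoid_congr {α β : Type} (e : α ≃ β) :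
    Nat.card (Setoid α) = Nat.card (Setoid β) :=
  Nat.card_congr
    { toFun := fun r => Setoid.comap e.symm r
      invFun := fun r => Setoid.comap e r
      left_inv := fun r => Setoid.ext fun x y => by simp [Setoid.comap_rel]
      right_inv := fun r => Setoid.ext fun x y => by simp [Setoid.comap_rel] }

theorem card_setoid_finset {α : Type} (s : Finset α) : Nat.card (Setoid s) = bell s.card :=
  card_setoid_congr s.equivFin

/-- The Bell recurrence, by choosing the complement of the class of a distinguished element. -/
theorem bell_succ' (n : ℕ) :
    bell (n + 1) = ∑ i ∈ Finset.range (n + 1), n.choose i * bell i := by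
  classical
  have h1 : bell (n + 1) = Nat.card (Setoid (Option (Fin n))) :=
    card_setoid_congr (finSuccEquiv n)
  have : Finite (Setoid (Option (Fin n))) :=
    Finite.of_injective (fun r : Setoid (Option (Fin n)) => r.r)
      fun r s h => Setoid.ext fun a b => by
        have := congrFun (congrFun h a) b
        exact iff_of_eq this
  rw [h1, Nat.card_congr (Equiv.sigmaFiberEquiv
    fun r : Setoid (Option (Fin n)) => Finset.univ.filter fun a => ¬ r (some a) none).symm,
    Nat.card_sigma]
  simp_rw [Nat.card_congr (setoidFiberEquiv _), card_setoid_finset]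
  rw [← Finset.powerset_univ, Finset.sum_powerset_apply_card (fun i => bell i)]
  simp

theorem bell_zero' : bell 0 = 1 := by
  unfold bell
  rw [Nat.card_eq_one_iff_unique]
  exact ⟨⟨fun r s => Setoid.ext fun a => a.elim0⟩, ⟨⊥⟩⟩

end BellRecurrence

/-! ### The umbral functional -/

section Umbral

/-- The linear functional on `ℤ[X]` sending `X ^ m` to the `m`-th Bell number. -/
noncomputable def umbral : ℤ[X] →ₗ[ℤ] ℤ :=
  (Polynomial.basisMonomials ℤ).constr ℤ fun m => (bell m : ℤ)

theorem umbral_X_pow (m : ℕ) : umbral (X ^ m) = bell m := by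
  have h : (X ^ m : ℤ[X]) = Polynomial.basisMonomials ℤ m := by
    simp [Polynomial.coe_basisMonomials, Polynomial.monomial_one_right_eq_X_pow]
  rw [h]
  exact Module.Basis.constr_basis _ _ _ _

theorem umbral_C_mul (a : ℤ) (p : ℤ[X]) : umbral (C a * p) = a * umbral p := by
  rw [Polynomial.C_mul', map_smul, smul_eq_mul]

/-- The Bell recurrence in umbral form, extended linearly from monomials. -/
theorem umbral_X_mul (p : ℤ[X]) : umbral (X * p) = umbral (p.comp (X + 1)) := by
  induction p using Polynomial.induction_on' with
  | add p q hp hq => simp [mul_add, hp, hq]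
  | monomial n a =>
    rw [← C_mul_X_pow_eq_monomial, mul_left_comm, umbral_C_mul, ← pow_succ', umbral_X_pow,
      bell_succ', mul_comp, C_comp, pow_comp, X_comp, umbral_C_mul, add_pow, map_sum]
    congr 1
    push_cast
    refine Finset.sum_congr rfl fun i _ => ?_
    have : (X ^ i * 1 ^ (n - i) * (n.choose i : ℤ[X])) = C (n.choose i : ℤ) * X ^ i := by
      simp [mul_comm]
    rw [this, umbral_C_mul, umbral_X_pow]

theorem umbral_X_mul_sub_one_pow (m : ℕ) : umbral (X * (X - 1) ^ m) = bell m := by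
  rw [umbral_X_mul, ← umbral_X_pow]
  simp

theorem umbral_expand {n k : ℕ} (h : k ≤ n) : umbral (X ^ (n - k) * (X - 1) ^ k) =
    ∑ i ∈ Finset.range (k + 1), (-1 : ℤ) ^ i * (k.choose i) * (bell (n - i) : ℤ) := by
  rw [sub_eq_neg_add, add_pow, Finset.mul_sum, map_sum]
  refine Finset.sum_congr rfl fun i hi => ?_
  have hi' : i ≤ k := Nat.lt_succ_iff.mp (Finset.mem_range.mp hi)
  have : (X ^ (n - k) * ((-1) ^ i * X ^ (k - i) * (k.choose i : ℤ[X]))) =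
      C ((-1 : ℤ) ^ i * (k.choose i)) * X ^ (n - i) := by
    have e : n - i = (n - k) + (k - i) := by omega
    rw [e, pow_add]
    simp
    ring
  rw [this, umbral_C_mul, umbral_X_pow]

/-- The closed form for `firstCount n k`: the difference `∇^k` of the Bell numbers at `n` if `k < n`,
and the Bell number itself if `k` is the largest value `n`. -/
noncomputable def bellEntry (n k : ℕ) : ℤ :=
  if k < n then umbral (X ^ (n - k) * (X - 1) ^ k) else bell n

/-- The tail sum of a row telescopes, as `X - (X - 1) = 1`. -/
theorem sum_bellEntry {n k : ℕ} (hk : k ≤ n) :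
    ∑ l ∈ Finset.Icc k n, bellEntry n l = umbral (X ^ (n + 1 - k) * (X - 1) ^ k) := by
  induction hk using Nat.decreasingInduction with
  | self =>
    simp [bellEntry, umbral_X_mul_sub_one_pow]
  | of_succ k hk ih =>
    rw [← Finset.insert_Icc_add_one_left_eq_Icc hk.le, Finset.sum_insert (by simp), ih, bellEntry,
      if_pos hk, ← map_add]
    congr 1
    have e1 : n + 1 - (k + 1) = n - k := by omega
    have e2 : n + 1 - k = (n - k) + 1 := by omega
    rw [e1, e2]
    ring

end Umbral

/-! ### Removing the first entry -/

section FirstEntry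

/-- The permutation with first value `k` whose other entries are order-isomorphic to `σ`. -/
def ins {n : ℕ} (k : Fin (n + 1)) (σ : Equiv.Perm (Fin n)) : Equiv.Perm (Fin (n + 1)) :=
  ((finSuccEquiv' 0).trans σ.optionCongr).trans (finSuccEquiv' k).symm

@[simp] theorem ins_zero {n : ℕ} (k : Fin (n + 1)) (σ : Equiv.Perm (Fin n)) : ins k σ 0 = k := by
  simp [ins]

@[simp] theorem ins_succ {n : ℕ} (k : Fin (n + 1)) (σ : Equiv.Perm (Fin n)) (i : Fin n) :
    ins k σ i.succ = k.succAbove (σ i) := by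
  have : finSuccEquiv' 0 i.succ = some i := by
    rw [← Fin.succAbove_zero_apply, finSuccEquiv'_succAbove]
  simp [ins, this]

theorem ins_injective {n : ℕ} (k : Fin (n + 1)) : Function.Injective (ins k) := fun σ τ h => by
  refine Equiv.ext fun i => ?_
  have := congrArg (fun π => π i.succ) h
  simpa using this

theorem exists_ins {n : ℕ} (k : Fin (n + 1)) (π : Equiv.Perm (Fin (n + 1))) (h : π 0 = k) :
    ∃ σ, ins k σ = π := by
  have hne : ∀ i : Fin n, ∃ j, k.succAbove j = π i.succ := fun i => by
    refine Fin.exists_succAbove_eq fun q => ?_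
    exact Fin.succ_ne_zero i (π.injective (q.trans h.symm))
  choose f hf using hne
  have finj : Function.Injective f := fun a b hab => by
    have := hf a
    rw [hab, hf b] at this
    exact (Fin.succ_injective _ (π.injective this)).symm
  refine ⟨Equiv.ofBijective f (Finite.injective_iff_bijective.mp finj), ?_⟩
  ext i
  refine Fin.cases ?_ (fun i => ?_) i
  · simp [h]
  · simp [hf]

/-- A first entry `k` creates a 21-3 exactly when `k` is not the largest value and the second entry
is smaller than `k`; `k ≤ (σ 0).castSucc` says that the second entry exceeds `k`. -/
theorem avoids_ins {n : ℕ} (k : Fin (n + 2)) (σ : Equiv.Perm (Fin (n + 1))) :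
    Avoids21d3 (ins k σ) ↔ Avoids21d3 σ ∧ (k = Fin.last _ ∨ k ≤ (σ 0).castSucc) := by
  have hmono : ∀ a b : Fin (n + 1), k.succAbove a < k.succAbove b ↔ a < b := fun a b =>
    (Fin.strictMono_succAbove k).lt_iff_lt
  constructor
  · intro H
    refine ⟨?_, ?_⟩
    · rintro ⟨i, j, h, hij, h1, h2⟩
      refine H ⟨i.succ, j.succ, by simpa using h, by simpa using hij, ?_, ?_⟩
      · have e : (⟨i.succ.1 + 1, by simpa using h⟩ : Fin (n + 2)) = Fin.succ ⟨i.1 + 1, h⟩ := by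
          ext; simp
        rw [e, ins_succ, ins_succ, hmono]
        exact h1
      · rw [ins_succ, ins_succ, hmono]
        exact h2
    · by_contra! hc
      obtain ⟨hk, hlt⟩ := hc
      -- the position of the largest value is neither the first nor the second
      have hm : ins k σ ((ins k σ).symm (Fin.last _)) = Fin.last _ := by simp
      generalize (ins k σ).symm (Fin.last _) = j at hm
      have hs : k.succAbove (σ 0) < k := by
        rw [Fin.succAbove_lt_iff_castSucc_lt]
        exact hlt
      have h1 : ins k σ 1 = k.succAbove (σ 0) := by
        rw [← ins_succ]; rfl
      have hkl : k < Fin.last _ := lt_of_le_of_ne (Fin.le_last k) hk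
      refine H ⟨0, j, by simp, ?_, ?_, ?_⟩
      · have j0 : j ≠ 0 := by
          rintro rfl
          exact hk (by simpa using hm)
        have j1 : j ≠ 1 := by
          rintro rfl
          rw [h1] at hm
          exact absurd (hm ▸ hs) (not_lt.mpr (Fin.le_last k))
        have a0 : j.1 ≠ 0 := fun q => j0 (Fin.ext q)
        have a1 : j.1 ≠ 1 := fun q => j1 (Fin.ext (by simp [q]))
        simp only [Fin.val_zero]
        omega
      · rw [ins_zero]
        have e : (⟨(0 : Fin (n + 2)).1 + 1, by simp⟩ : Fin (n + 2)) = 1 := by ext; simp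
        rw [e, h1]
        exact hs
      · rw [hm, ins_zero]
        exact hkl
  · rintro ⟨H, hk⟩ ⟨i, j, h, hij, h1, h2⟩
    have hj : j ≠ 0 := by
      rintro rfl
      simp at hij
    obtain ⟨j, rfl⟩ := Fin.exists_succ_eq.mpr hj
    rcases Fin.eq_zero_or_eq_succ i with rfl | ⟨i, rfl⟩
    · have e : (⟨(0 : Fin (n + 2)).1 + 1, h⟩ : Fin (n + 2)) = Fin.succ 0 := by ext; simp
      rw [e, ins_succ, ins_zero, Fin.succAbove_lt_iff_castSucc_lt] at h1
      rw [ins_zero] at h2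
      rcases hk with rfl | hk
      · exact absurd h2 (not_lt.mpr (Fin.le_last _))
      · exact absurd h1 (not_lt.mpr hk)
    · have h' : i.1 + 1 < n + 1 := by simpa using h
      have e : (⟨i.succ.1 + 1, h⟩ : Fin (n + 2)) = Fin.succ ⟨i.1 + 1, h'⟩ := by ext; simp
      rw [e, ins_succ, ins_succ, hmono] at h1
      rw [ins_succ, ins_succ, hmono] at h2
      exact H ⟨i, j, h', by simpa using hij, h1, h2⟩

/-- The number of avoiding permutations of `Fin (n + 1)` with first value `k`. -/
noncomputable def firstCount (n : ℕ) (k : Fin (n + 1)) : ℕ :=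
  Nat.card {π : Equiv.Perm (Fin (n + 1)) // Avoids21d3 π ∧ π 0 = k}

open Classical in
theorem firstCount_succ (n : ℕ) (k : Fin (n + 2)) :
    firstCount (n + 1) k =
      ∑ l : Fin (n + 1), if k = Fin.last _ ∨ k ≤ l.castSucc then firstCount n l else 0 := by
  have e : {σ : Equiv.Perm (Fin (n + 1)) //
        Avoids21d3 σ ∧ (k = Fin.last _ ∨ k ≤ (σ 0).castSucc)} ≃
      {π : Equiv.Perm (Fin (n + 2)) // Avoids21d3 π ∧ π 0 = k} :=
    Equiv.ofBijective (fun σ => ⟨ins k σ.1, (avoids_ins k σ.1).mpr σ.2, ins_zero k σ.1⟩) <| by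
      constructor
      · intro σ τ h
        exact Subtype.ext (ins_injective k (congrArg Subtype.val h))
      · rintro ⟨π, hπ, h0⟩
        obtain ⟨σ, rfl⟩ := exists_ins k π h0
        exact ⟨⟨σ, (avoids_ins k σ).mp hπ⟩, rfl⟩
  rw [firstCount, ← Nat.card_congr e, Nat.card_eq_fintype_card, Fintype.card_subtype,
    Finset.card_eq_sum_card_fiberwise (f := fun σ => σ 0) (t := Finset.univ) (by simp)]
  refine Finset.sum_congr rfl fun l _ => ?_
  rw [firstCount, Nat.card_eq_fintype_card, Fintype.card_subtype, Finset.filter_filter]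
  split_ifs with hl
  · congr 1
    ext σ
    simp only [Finset.mem_filter, Finset.mem_univ, true_and]
    constructor
    · rintro ⟨⟨h1, _⟩, h2⟩
      exact ⟨h1, h2⟩
    · rintro ⟨h1, rfl⟩
      exact ⟨⟨h1, hl⟩, rfl⟩
  · rw [Finset.card_eq_zero, Finset.filter_eq_empty_iff]
    rintro σ - ⟨⟨_, h⟩, rfl⟩
    exact hl h

theorem firstCount_eq (n : ℕ) (k : Fin (n + 1)) : (firstCount n k : ℤ) = bellEntry n k := by
  induction n with
  | zero =>
    have : firstCount 0 k = 1 := by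
      have : Subsingleton (Fin (0 + 1)) := inferInstanceAs (Subsingleton (Fin 1))
      rw [firstCount, Nat.card_eq_one_iff_unique]
      refine ⟨inferInstance, ⟨1, ?_, Subsingleton.elim _ _⟩⟩
      rintro ⟨i, j, h, -⟩
      omega
    simp [this, bellEntry, bell_zero']
  | succ n ih =>
    classical
    -- both cases of the recurrence are tail sums, the largest value behaving like the smallest
    have tail : ∀ m ≤ n, ∑ l : Fin (n + 1), (if m ≤ l.1 then bellEntry n l else 0) =
        umbral (X ^ (n + 1 - m) * (X - 1) ^ m) := fun m hm => by
      rw [← sum_bellEntry hm, Fin.sum_univ_eq_sum_range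
        (fun l => if m ≤ l then bellEntry n l else 0), ← Finset.sum_filter]
      congr 1
      ext l
      simp only [Finset.mem_filter, Finset.mem_range, Finset.mem_Icc]
      omega
    rw [firstCount_succ]
    push_cast
    simp_rw [ih]
    rcases eq_or_ne k (Fin.last _) with rfl | hk
    · have := tail 0 (Nat.zero_le _)
      simp only [Nat.zero_le, if_true, Nat.sub_zero, pow_zero, mul_one, umbral_X_pow] at this
      simp [bellEntry] at this ⊢
      exact this
    · have hlt : k.1 < n + 1 := Fin.val_lt_last hk
      simp only [hk, false_or]
      rw [bellEntry, if_pos hlt, ← tail k (by omega)]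
      rfl

end FirstEntry

theorem bell_distribution (n : ℕ) (hn : 2 ≤ n) :
    Nat.card {π : Equiv.Perm (Fin n) // Avoids21d3 π ∧ π ⟨0, by omega⟩ = ⟨n - 1, by omega⟩} = bell (n - 1) ∧
    ∀ k : ℕ, (hk1 : 1 ≤ k) → (hk2 : k ≤ n - 1) →
      (Nat.card {π : Equiv.Perm (Fin n) // Avoids21d3 π ∧ π ⟨0, by omega⟩ = ⟨k - 1, by omega⟩} : ℤ) =
        ∑ i ∈ Finset.range (k), (-1 : ℤ) ^ i * (((k - 1)).choose i) * (bell (n - 1 - i) : ℤ) := by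
  obtain ⟨n, rfl⟩ : ∃ m, n = m + 1 := ⟨n - 1, by omega⟩
  refine ⟨?_, fun k hk1 hk2 => ?_⟩
  · have := firstCount_eq n (Fin.last n)
    simp only [bellEntry, Fin.val_last, lt_irrefl, if_false] at this
    exact_mod_cast this
  · obtain ⟨k, rfl⟩ : ∃ m, k = m + 1 := ⟨k - 1, by omega⟩
    have hk : k < n := by simpa using hk2
    have := firstCount_eq n ⟨k, by omega⟩
    rw [bellEntry, if_pos hk, umbral_expand hk.le] at this
    exact this
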